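/- Let α ∈ (1,2), let X be a real Banach space, and let {T(t)}_{t>0} be a Riemann-Liouville α-order fractional resolvent on X. Then {T(t)}_{t>0} is a Riemann-Liouville α-order fractional cosine function; in particular, for every x ∈ X and all t,s > 0 there holds Γ(2-α) ∫_0^{t+s} T(σ)x dσ = ∫_0^t ∫_0^s (t-σ)^{1-α} T(σ)T(τ)x dτ dσ + ∫_0^t ∫_0^s (s-τ)^{1-α} T(σ)T(τ)x dτ dσ − ∫_0^t ∫_0^s (t+s-σ-τ)^{1-α} T(σ)T(τ)x dτ dσ. -/

import Mathlib

/-!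
Write `J_a(t) = ∫_0^t (t-σ)^{a-1} T(σ) dσ` (`RLJ`), `K = J_{2-α}`, `S = J_1` and `κ = Γ(2-α)`.
The first two double integrals of the functional equation are `K(t) S(s) x` and `S(t) K(s) x`;
the work lies in the third one, `M(t,s) x` (`RLM`).

Integrating the resolvent equation against `(·)^{1-α}` in both variables, and composing the
fractional integrals of orders `2-α` and `α`, gives (`resolvent_J2`)
`K(s) J_2(t) - J_2(s) K(t) = κ (J_2(t) - J_2(s))`.
So for a vector `x = J_2(ε) y` one has `K(r) x = κ x + J_2(r) z` with `z = K(ε) y - κ y`; in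
particular `K(r) x` is differentiable in `r`.

Let `c = t + s`. The rectangle `(0,t) × (0,s)` is the region `σ < t, σ + τ < c` without a
triangle, and integrating the kernel in one variable over each of these gives (`Adm.M_eq`)
`M(t,s) x = ∫_0^t (T(r) K(c-r) x - T(c-r) K(r) x) dr`.
If `K(r) x = κ x + J_2(r) z`, the integrand is the derivative in `r` of
`κ S(r) x + κ S(c-r) x + S(r) J_2(c-r) z + S(c-r) J_2(r) z`,
because `J_2` has derivative `S` and the two terms `S(r) S(c-r) z` cancel. Evaluating at the end
points is the functional equation for such `x` (`Adm.special`).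

Finally `J_2(ε)` commutes with every operator in the functional equation, and `J_2(ε) v = 0` for all
`ε > 0` forces `v = 0` (`Adm.eq_zero_of_J2`), because differentiating twice gives `T(ε) v = 0`. The
functional equation for all the vectors `J_2(ε) x` therefore implies it for `x`.
-/

open MeasureTheory Filter Topology Set

/-- Riemann-Liouville fractional integral of order `β` of `f` at `t`:
`J_t^β f(t) = (1/Γ(β)) ∫_0^t (t-σ)^{β-1} f(σ) dσ`. -/
noncomputable def RLint {X : Type*} [NormedAddCommGroup X] [NormedSpace ℝ X]
    (β t : ℝ) (f : ℝ → X) : X :=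
  (Real.Gamma β)⁻¹ • ∫ σ in (0:ℝ)..t, (t - σ) ^ (β - 1) • f σ

/-- `{T(t)}_{t>0}` is a Riemann-Liouville `α`-order fractional cosine function. -/
def IsRLFracCosine {X : Type*} [NormedAddCommGroup X] [NormedSpace ℝ X]
    (α : ℝ) (T : ℝ → X →L[ℝ] X) : Prop :=
  (∀ x : X, ContinuousOn (fun t => T t x) (Set.Ioi (0:ℝ))) ∧
  (∀ x : X, Tendsto (fun t : ℝ => t ^ (2 - α) • T t x) (𝓝[>] (0:ℝ))
      (𝓝 ((Real.Gamma (α - 1))⁻¹ • x))) ∧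
  (∀ x : X, ∀ t > (0:ℝ), ∀ s > (0:ℝ),
    Real.Gamma (2 - α) • (∫ σ in (0:ℝ)..(t + s), T σ x) =
      (∫ σ in (0:ℝ)..t, ∫ τ in (0:ℝ)..s, (t - σ) ^ (1 - α) • T σ (T τ x)) +
      (∫ σ in (0:ℝ)..t, ∫ τ in (0:ℝ)..s, (s - τ) ^ (1 - α) • T σ (T τ x)) -
      (∫ σ in (0:ℝ)..t, ∫ τ in (0:ℝ)..s, (t + s - σ - τ) ^ (1 - α) • T σ (T τ x)))

/-- `{T(t)}_{t>0}` is a Riemann-Liouville `α`-order fractional resolvent. -/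
def IsRLFracResolvent {X : Type*} [NormedAddCommGroup X] [NormedSpace ℝ X]
    (α : ℝ) (T : ℝ → X →L[ℝ] X) : Prop :=
  (∀ x : X, ContinuousOn (fun t => T t x) (Set.Ioi (0:ℝ)) ∧
    Tendsto (fun t : ℝ => (Real.Gamma (α - 1) * t ^ (2 - α)) • T t x) (𝓝[>] (0:ℝ)) (𝓝 x)) ∧
  (∀ t > (0:ℝ), ∀ s > (0:ℝ), ∀ x : X, T s (T t x) = T t (T s x)) ∧
  (∀ x : X, ∀ t > (0:ℝ), ∀ s > (0:ℝ),
    T s (RLint α t (fun σ => T σ x)) - RLint α s (fun σ => T σ (T t x)) =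
      (s ^ (α - 2) / Real.Gamma (α - 1)) • RLint α t (fun σ => T σ x) -
      (t ^ (α - 2) / Real.Gamma (α - 1)) • RLint α s (fun σ => T σ x))


/-! ### Beta integrals -/

lemma beta_left {a b t : ℝ} (hb : 0 < b) (ht : 0 < t) :
    IntervalIntegrable (fun r : ℝ => (t - r) ^ (a - 1) * r ^ (b - 1)) volume 0 (t / 2) := by
  apply IntervalIntegrable.continuousOn_mul
  · exact intervalIntegral.intervalIntegrable_rpow' (by linarith)
  · intro x hx
    rw [uIcc_of_le (by positivity)] at hx
    have : t - x ≠ 0 := by have := hx.2; intro h; linarith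
    exact ((continuousAt_const.sub continuousAt_id).rpow_const
      (Or.inl this)).continuousWithinAt

lemma beta_integrable {a b t : ℝ} (ha : 0 < a) (hb : 0 < b) (ht : 0 ≤ t) :
    IntervalIntegrable (fun r : ℝ => (t - r) ^ (a - 1) * r ^ (b - 1)) volume 0 t := by
  rcases ht.eq_or_lt with rfl | ht
  · exact IntervalIntegrable.refl
  refine (beta_left hb ht).trans ?_
  have h := ((beta_left (a := b) (b := a) ha ht).comp_sub_left t).symm
  have e : t - t / 2 = t / 2 := by ring
  rw [e, sub_zero] at h
  refine h.congr (fun x _ => ?_)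
  simp only [sub_sub_cancel]
  ring

lemma beta_value {a b t : ℝ} (ha : 0 < a) (hb : 0 < b) (ht : 0 < t) :
    ∫ r in (0:ℝ)..t, (t - r) ^ (a - 1) * r ^ (b - 1) =
      Real.Gamma a * Real.Gamma b / Real.Gamma (a + b) * t ^ (a + b - 1) := by
  have h := Complex.betaIntegral_scaled (b : ℂ) (a : ℂ) ht
  rw [Complex.betaIntegral_eq_Gamma_mul_div _ _ (by simpa using hb) (by simpa using ha)] at h
  have e : ∀ x ∈ uIcc (0:ℝ) t, (x : ℂ) ^ ((b : ℂ) - 1) * ((t : ℂ) - x) ^ ((a : ℂ) - 1) =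
      (((t - x) ^ (a - 1) * x ^ (b - 1) : ℝ) : ℂ) := by
    intro x hx
    rw [uIcc_of_le ht.le] at hx
    rw [Complex.ofReal_mul, Complex.ofReal_cpow (by linarith [hx.2]),
      Complex.ofReal_cpow hx.1]
    push_cast
    ring
  rw [intervalIntegral.integral_congr e, intervalIntegral.integral_ofReal] at h
  have e2 : (t : ℂ) ^ ((b : ℂ) + a - 1) = ((t ^ (a + b - 1) : ℝ) : ℂ) := by
    rw [Complex.ofReal_cpow ht.le]
    push_cast
    ring_nf
  rw [e2, ← Complex.ofReal_add, Complex.Gamma_ofReal, Complex.Gamma_ofReal,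
    Complex.Gamma_ofReal] at h
  norm_cast at h
  rw [h, add_comm b a]
  ring

/-! ### Strongly continuous operator families -/

/-- By uniform boundedness, strong continuity of an operator family on `U` is
joint continuity of its action. -/
lemma joint_cont {X : Type*} [NormedAddCommGroup X] [NormedSpace ℝ X] [CompleteSpace X]
    {A : ℝ → X →L[ℝ] X} {U : Set ℝ} (hA : ∀ x, ContinuousOn (fun r => A r x) U) :
    ContinuousOn (fun p : ℝ × X => A p.1 p.2) (U ×ˢ univ) := by
  rintro ⟨r, x⟩ ⟨hr, -⟩
  refine tendsto_of_seq_tendsto (fun u hu => ?_)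
  rw [tendsto_nhdsWithin_iff] at hu
  obtain ⟨hu1, hu2⟩ := hu
  obtain ⟨n0, hn0⟩ := eventually_atTop.1 hu2
  have hfst : Tendsto (fun n => (u n).1) atTop (𝓝[U] r) :=
    tendsto_nhdsWithin_iff.2 ⟨(continuous_fst.tendsto _).comp hu1, hu2.mono fun n h => h.1⟩
  have hsnd : Tendsto (fun n => (u n).2) atTop (𝓝 x) := (continuous_snd.tendsto _).comp hu1
  have hlim : ∀ y, Tendsto (fun n => A (u n).1 y) atTop (𝓝 (A r y)) := fun y =>
    (hA y r hr).tendsto.comp hfst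
  obtain ⟨C, hC⟩ := banach_steinhaus (g := fun n => A (u n).1) (fun y => by
    obtain ⟨C, hC⟩ := (hlim y).norm.bddAbove_range
    exact ⟨C, fun i => hC ⟨i, rfl⟩⟩)
  have h1 : Tendsto (fun n => A (u n).1 ((u n).2 - x)) atTop (𝓝 0) := by
    have h0 : Tendsto (fun n => C * ‖(u n).2 - x‖) atTop (𝓝 0) := by
      have := (hsnd.sub_const x).norm.const_mul C
      simpa using this
    refine squeeze_zero_norm (fun n => ?_) h0
    exact (A (u n).1).le_of_opNorm_le (hC n) _
  have h2 := h1.add (hlim x)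
  simpa [Function.comp_def] using h2

/-- Product rule for a strongly differentiable operator family acting on a differentiable curve. -/
lemma prod_deriv {X : Type*} [NormedAddCommGroup X] [NormedSpace ℝ X] [CompleteSpace X]
    {A : ℝ → X →L[ℝ] X} {U : Set ℝ} (hA : ∀ x, ContinuousOn (fun r => A r x) U)
    {u : ℝ → X} {a' u' : X} {r : ℝ} (hU : U ∈ 𝓝 r)
    (h1 : HasDerivAt (fun s => A s (u r)) a' r) (h2 : HasDerivAt u u' r) :
    HasDerivAt (fun s => A s (u s)) (a' + A r u') r := by
  have hq : Tendsto (slope u r) (𝓝[≠] r) (𝓝 u') := hasDerivAt_iff_tendsto_slope.1 h2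
  rw [hasDerivAt_iff_tendsto_slope] at h1 ⊢
  have hid : Tendsto (fun s : ℝ => s) (𝓝[≠] r) (𝓝[U] r) :=
    tendsto_nhdsWithin_iff.2 ⟨nhdsWithin_le_nhds, nhdsWithin_le_nhds hU⟩
  have hj : Tendsto (fun s => A s (slope u r s)) (𝓝[≠] r) (𝓝 (A r u')) := by
    have hc := joint_cont hA (r, u') ⟨mem_of_mem_nhds hU, mem_univ _⟩
    have hp : Tendsto (fun s => (s, slope u r s)) (𝓝[≠] r) (𝓝[U ×ˢ univ] (r, u')) := by
      rw [nhdsWithin_prod_eq, nhdsWithin_univ]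
      exact hid.prodMk hq
    exact hc.tendsto.comp hp
  refine (h1.add hj).congr (fun s => ?_)
  simp only [slope_def_module, map_smul, map_sub, smul_sub]
  abel

section Adm

/-! ### The operators `J_a(t) = ∫_0^t (t-σ)^{a-1} T(σ) dσ` -/

variable {X : Type*} [NormedAddCommGroup X] [NormedSpace ℝ X]

lemma integral_congr_Ioc {a b : ℝ} (hab : a ≤ b) {f g : ℝ → X} (h : ∀ σ ∈ Ioc a b, f σ = g σ) :
    ∫ σ in a..b, f σ = ∫ σ in a..b, g σ := by
  rw [intervalIntegral.integral_of_le hab, intervalIntegral.integral_of_le hab]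
  exact setIntegral_congr_fun measurableSet_Ioc h

/-- The regularity shared by all arguments below: a commuting, strongly continuous family on
`(0, ∞)` whose operator norm is `O(σ ^ (α - 2))` on bounded intervals. -/
structure Adm (α : ℝ) (T : ℝ → X →L[ℝ] X) : Prop where
  one_lt : 1 < α
  lt_two : α < 2
  cont : ∀ x : X, ContinuousOn (fun t => T t x) (Ioi (0:ℝ))
  bound : ∀ N : ℝ, 0 < N → ∃ C, 0 ≤ C ∧ ∀ σ ∈ Ioc (0:ℝ) N, ‖T σ‖ ≤ C * σ ^ (α - 2)
  comm : ∀ t > (0:ℝ), ∀ s > (0:ℝ), ∀ x : X, T s (T t x) = T t (T s x)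

variable {α : ℝ} {T : ℝ → X →L[ℝ] X}

/-- The bound `‖T(σ)‖ ≤ C σ^{α-2}` is the uniform boundedness principle applied to the operators
`σ^{2-α} T(σ)`, whose orbits are bounded near `0` because they converge there. -/
lemma adm_of_resolvent [CompleteSpace X] (hα : α ∈ Ioo (1:ℝ) 2) (hT : IsRLFracResolvent α T) :
    Adm α T := by
  refine ⟨hα.1, hα.2, fun x => (hT.1 x).1, fun N hN => ?_, hT.2.1⟩
  have hG : 0 < Real.Gamma (α - 1) := Real.Gamma_pos_of_pos (by linarith [hα.1])
  obtain ⟨C, hC⟩ := banach_steinhaus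
    (g := fun σ : Ioc (0:ℝ) N => (Real.Gamma (α - 1) * (σ:ℝ) ^ (2 - α)) • T σ) (fun x => by
      have h1 := (hT.1 x).2.norm.eventually_lt_const (lt_add_one ‖x‖)
      obtain ⟨δ, hδ, hδ'⟩ := mem_nhdsGT_iff_exists_Ioo_subset.1 h1
      have hcont : ContinuousOn (fun t : ℝ => ‖(Real.Gamma (α - 1) * t ^ (2 - α)) • T t x‖)
          (Icc (δ / 2) N) := by
        have hpos : Icc (δ / 2) N ⊆ Ioi 0 := fun t ht => by
          have : (0:ℝ) < δ := hδ
          exact lt_of_lt_of_le (by positivity) ht.1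
        refine ContinuousOn.norm (ContinuousOn.smul ?_ ((hT.1 x).1.mono hpos))
        exact continuousOn_const.mul (continuousOn_id.rpow_const
          fun t ht => Or.inl (ne_of_gt (hpos ht)))
      obtain ⟨C, hC⟩ := isCompact_Icc.bddAbove_image hcont
      refine ⟨max C (‖x‖ + 1), fun σ => ?_⟩
      by_cases h : (σ:ℝ) < δ
      · exact le_max_of_le_right (le_of_lt (hδ' ⟨σ.2.1, h⟩))
      · have : (0:ℝ) < δ := hδ
        exact le_max_of_le_left (hC ⟨σ, ⟨by linarith, σ.2.2⟩, rfl⟩))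
  refine ⟨max C 0 / Real.Gamma (α - 1), by positivity, fun σ hσ => ?_⟩
  have h := hC ⟨σ, hσ⟩
  have hp : 0 < σ ^ (2 - α) := Real.rpow_pos_of_pos hσ.1 _
  have e : σ ^ (α - 2) = (σ ^ (2 - α))⁻¹ := by
    rw [← Real.rpow_neg hσ.1.le]; ring_nf
  rw [norm_smul, Real.norm_of_nonneg (by positivity)] at h
  rw [e, ← div_eq_mul_inv, div_div, le_div_iff₀ (by positivity)]
  simp only at h
  linarith [le_max_left C 0]

lemma Adm.joint [CompleteSpace X] (h : Adm α T) :
    ContinuousOn (fun p : ℝ × X => T p.1 p.2) (Ioi 0 ×ˢ univ) := joint_cont h.cont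

/-- Integrability of `w(σ) T(σ) u(σ)` for bounded continuous `u`, when the scalar weight `w` is
integrable against the singularity `σ^{α-2}` of `T`. -/
lemma Adm.wint [CompleteSpace X] (h : Adm α T) {t : ℝ} (ht : 0 ≤ t) {w : ℝ → ℝ}
    (hw : Measurable w)
    (hwi : IntervalIntegrable (fun σ => w σ * σ ^ (α - 2)) volume 0 t) {u : ℝ → X}
    (hu : ContinuousOn u (Ioc 0 t)) {B : ℝ} (hB : ∀ σ ∈ Ioc 0 t, ‖u σ‖ ≤ B) :
    IntervalIntegrable (fun σ => w σ • T σ (u σ)) volume 0 t := by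
  rcases ht.eq_or_lt with rfl | ht0
  · exact IntervalIntegrable.refl
  obtain ⟨C, hC0, hC⟩ := h.bound t ht0
  rw [intervalIntegrable_iff_integrableOn_Ioc_of_le ht] at hwi ⊢
  have hcont : ContinuousOn (fun σ => T σ (u σ)) (Ioc 0 t) :=
    h.joint.comp (continuousOn_id.prodMk hu) (fun σ hσ => ⟨hσ.1, mem_univ _⟩)
  refine Integrable.mono' (hwi.norm.const_mul (C * B))
    (hw.aestronglyMeasurable.smul (hcont.aestronglyMeasurable measurableSet_Ioc)) ?_
  refine (ae_restrict_iff' measurableSet_Ioc).2 (Eventually.of_forall fun σ hσ => ?_)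
  have hp : 0 ≤ σ ^ (α - 2) := Real.rpow_nonneg hσ.1.le _
  rw [norm_smul, norm_mul, Real.norm_of_nonneg hp]
  have h1 : ‖T σ (u σ)‖ ≤ C * σ ^ (α - 2) * B :=
    (T σ).le_of_opNorm_le_of_le (hC σ hσ) (hB σ hσ)
  calc ‖w σ‖ * ‖T σ (u σ)‖ ≤ ‖w σ‖ * (C * σ ^ (α - 2) * B) := by gcongr
    _ = _ := by ring

lemma Adm.J_integrable [CompleteSpace X] (h : Adm α T) {a t : ℝ} (ha : 0 < a) (ht : 0 ≤ t)
    (y : X) : IntervalIntegrable (fun σ => (t - σ) ^ (a - 1) • T σ y) volume 0 t := by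
  refine h.wint ht (w := fun σ => (t - σ) ^ (a - 1)) (by fun_prop) ?_ continuousOn_const
    (fun σ _ => le_rfl)
  have := beta_integrable (a := a) (b := α - 1) ha (by linarith [h.one_lt]) ht
  convert this using 4
  ring

lemma Adm.T_integrable [CompleteSpace X] (h : Adm α T) {t : ℝ} (ht : 0 ≤ t)
    (y : X) : IntervalIntegrable (fun σ => T σ y) volume 0 t := by
  simpa using h.J_integrable one_pos ht y

lemma Adm.exists_J [CompleteSpace X] (h : Adm α T) {a t : ℝ} (ha : 0 < a) (ht : 0 ≤ t) :
    ∃ L : X →L[ℝ] X, ∀ y, L y = ∫ σ in (0:ℝ)..t, (t - σ) ^ (a - 1) • T σ y := by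
  rcases ht.eq_or_lt with rfl | ht0
  · exact ⟨0, by simp⟩
  obtain ⟨C, hC0, hC⟩ := h.bound t ht0
  have hi := beta_integrable (a := a) (b := α - 1) ha (by linarith [h.one_lt]) ht
  refine ⟨LinearMap.mkContinuous
    { toFun := fun y => ∫ σ in (0:ℝ)..t, (t - σ) ^ (a - 1) • T σ y
      map_add' := fun y z => ?_
      map_smul' := fun c y => ?_ }
    (∫ σ in (0:ℝ)..t, C * ((t - σ) ^ (a - 1) * σ ^ (α - 1 - 1))) (fun y => ?_), fun y => rfl⟩
  · rw [← intervalIntegral.integral_add (h.J_integrable ha ht y) (h.J_integrable ha ht z)]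
    simp
  · rw [RingHom.id_apply, ← intervalIntegral.integral_smul]
    simp only [map_smul]
    congr 1 with σ
    rw [smul_comm]
  · simp only [LinearMap.coe_mk, AddHom.coe_mk]
    rw [← intervalIntegral.integral_mul_const]
    refine intervalIntegral.norm_integral_le_of_norm_le ht
      (Eventually.of_forall fun σ hσ => ?_) ((hi.const_mul C).mul_const _)
    have hp : 0 ≤ (t - σ) ^ (a - 1) := Real.rpow_nonneg (by linarith [hσ.2]) _
    rw [norm_smul, Real.norm_of_nonneg hp]
    have h1 := (T σ).le_of_opNorm_le (hC σ hσ) y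
    rw [show α - 1 - 1 = α - 2 by ring]
    calc _ ≤ (t - σ) ^ (a - 1) * (C * σ ^ (α - 2) * ‖y‖) := by gcongr
      _ = _ := by ring

open Classical in
/-- The bounded operator `y ↦ ∫_0^t (t-σ)^{a-1} T(σ) y dσ`, that is, `Γ(a)` times the
Riemann-Liouville integral of order `a` of the family `T`; it is `0` if no bounded operator is
given by this formula. -/
noncomputable def RLJ (T : ℝ → X →L[ℝ] X) (a t : ℝ) : X →L[ℝ] X :=
  if h : ∃ L : X →L[ℝ] X, ∀ y, L y = ∫ σ in (0:ℝ)..t, (t - σ) ^ (a - 1) • T σ y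
  then h.choose else 0

lemma Adm.J_apply [CompleteSpace X] (h : Adm α T) {a t : ℝ} (ha : 0 < a) (ht : 0 ≤ t) (y : X) :
    RLJ T a t y = ∫ σ in (0:ℝ)..t, (t - σ) ^ (a - 1) • T σ y := by
  have := h.exists_J ha ht
  rw [RLJ, dif_pos this]
  exact this.choose_spec y

lemma Adm.T_J_comm [CompleteSpace X] (h : Adm α T) {a t r : ℝ} (ha : 0 < a) (ht : 0 ≤ t)
    (hr : 0 < r) (y : X) : T r (RLJ T a t y) = RLJ T a t (T r y) := by
  rw [h.J_apply ha ht, h.J_apply ha ht,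
    ← ContinuousLinearMap.intervalIntegral_comp_comm _ (h.J_integrable ha ht y)]
  refine integral_congr_Ioc ht (fun σ hσ => ?_)
  simp only [map_smul]
  rw [h.comm σ hσ.1 r hr]

lemma Adm.J_comm [CompleteSpace X] (h : Adm α T) {a b t s : ℝ} (ha : 0 < a) (ht : 0 ≤ t)
    (hb : 0 < b) (hs : 0 ≤ s) (y : X) :
    RLJ T a t (RLJ T b s y) = RLJ T b s (RLJ T a t y) := by
  rw [h.J_apply hb hs y, h.J_apply hb hs (RLJ T a t y),
    ← ContinuousLinearMap.intervalIntegral_comp_comm _ (h.J_integrable hb hs y)]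
  refine integral_congr_Ioc hs (fun σ hσ => ?_)
  simp only [map_smul]
  rw [h.T_J_comm ha ht hσ.1]

lemma primitive_cont {f : ℝ → X} (hf : ∀ N, 0 ≤ N → IntervalIntegrable f volume 0 N) :
    ContinuousOn (fun r => ∫ σ in (0:ℝ)..r, f σ) (Ici 0) := by
  intro r hr
  have hr' : (0:ℝ) ≤ r := hr
  have h1 : IntegrableOn f (uIcc 0 (r + 1)) volume := by
    rw [uIcc_of_le (by linarith), integrableOn_Icc_iff_integrableOn_Ioc,
      ← intervalIntegrable_iff_integrableOn_Ioc_of_le (by linarith)]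
    exact hf _ (by linarith)
  have h2 := intervalIntegral.continuousOn_primitive_interval h1
  rw [uIcc_of_le (by linarith)] at h2
  refine (h2 r ⟨hr', by linarith⟩).mono_of_mem_nhdsWithin ?_
  rw [← Ici_inter_Iic]
  exact inter_mem self_mem_nhdsWithin (nhdsWithin_le_nhds (Iic_mem_nhds (by linarith)))

lemma primitive_deriv [CompleteSpace X] {f : ℝ → X}
    (hf : ∀ N, 0 ≤ N → IntervalIntegrable f volume 0 N) (hc : ContinuousOn f (Ioi 0))
    {r : ℝ} (hr : 0 < r) : HasDerivAt (fun r => ∫ σ in (0:ℝ)..r, f σ) (f r) r :=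
  intervalIntegral.integral_hasDerivAt_right (hf r hr.le)
    (hc.stronglyMeasurableAtFilter isOpen_Ioi r hr) (hc.continuousAt (Ioi_mem_nhds hr))

lemma Adm.J_one [CompleteSpace X] (h : Adm α T) {t : ℝ} (ht : 0 ≤ t) (y : X) :
    RLJ T 1 t y = ∫ σ in (0:ℝ)..t, T σ y := by
  rw [h.J_apply one_pos ht]; simp

lemma Adm.S_cont [CompleteSpace X] (h : Adm α T) (y : X) :
    ContinuousOn (fun r => RLJ T 1 r y) (Ici 0) :=
  (primitive_cont fun _ hN => h.T_integrable hN y).congr fun _ hr => h.J_one hr y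

lemma Adm.S_deriv [CompleteSpace X] (h : Adm α T) (y : X) {r : ℝ} (hr : 0 < r) :
    HasDerivAt (fun r => RLJ T 1 r y) (T r y) r :=
  (primitive_deriv (fun _ hN => h.T_integrable hN y) (h.cont y) hr).congr_of_eventuallyEq
    ((eventually_gt_nhds hr).mono fun _ hs => h.J_one (le_of_lt hs) y)

lemma Adm.mT_integrable [CompleteSpace X] (h : Adm α T) {t : ℝ} (ht : 0 ≤ t)
    (y : X) : IntervalIntegrable (fun σ => σ • T σ y) volume 0 t :=
  (h.T_integrable ht y).continuousOn_smul continuousOn_id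

/-- Splitting the kernel `r - σ` writes `J_2(r)` through two primitives, so that its derivative
`J_1(r)` comes from the fundamental theorem of calculus alone. -/
lemma Adm.J_two [CompleteSpace X] (h : Adm α T) {r : ℝ} (hr : 0 ≤ r) (y : X) :
    RLJ T 2 r y = r • (∫ σ in (0:ℝ)..r, T σ y) - ∫ σ in (0:ℝ)..r, σ • T σ y := by
  rw [h.J_apply two_pos hr, ← intervalIntegral.integral_smul,
    ← intervalIntegral.integral_sub (f := fun σ => r • T σ y) ((h.T_integrable hr y).smul r)
      (h.mT_integrable hr y)]
  congr 1 with σ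
  rw [show (2:ℝ) - 1 = 1 by norm_num, Real.rpow_one, sub_smul]

lemma Adm.J2_cont [CompleteSpace X] (h : Adm α T) (y : X) :
    ContinuousOn (fun r => RLJ T 2 r y) (Ici 0) :=
  ((continuousOn_id.smul (primitive_cont fun _ hN => h.T_integrable hN y)).sub
    (primitive_cont fun _ hN => h.mT_integrable hN y)).congr fun _ hr => h.J_two hr y

lemma Adm.J2_deriv [CompleteSpace X] (h : Adm α T) (y : X) {r : ℝ} (hr : 0 < r) :
    HasDerivAt (fun r => RLJ T 2 r y) (RLJ T 1 r y) r := by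
  have h1 := (hasDerivAt_id r).smul
    (primitive_deriv (fun _ hN => h.T_integrable hN y) (h.cont y) hr)
  have h2 := primitive_deriv (fun _ hN => h.mT_integrable hN y)
    (continuousOn_id.smul (h.cont y)) hr
  have h3 := (h1.sub h2).congr_of_eventuallyEq
    ((eventually_gt_nhds hr).mono fun _ hs => h.J_two (le_of_lt hs) y)
  convert h3 using 1
  rw [h.J_one hr.le]
  simp

/-- The operators `J_2(ε)` separate points. -/
lemma Adm.eq_zero_of_J2 [CompleteSpace X] (h : Adm α T) {v : X}
    (hlim : Tendsto (fun t : ℝ => (Real.Gamma (α - 1) * t ^ (2 - α)) • T t v) (𝓝[>] (0:ℝ)) (𝓝 v))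
    (hv : ∀ ε > 0, RLJ T 2 ε v = 0) : v = 0 := by
  have hS : ∀ r > 0, RLJ T 1 r v = 0 := fun r hr =>
    (h.J2_deriv v hr).unique ((hasDerivAt_const r (0:X)).congr_of_eventuallyEq
      ((eventually_gt_nhds hr).mono fun s hs => hv s hs))
  have hTz : ∀ r > 0, T r v = 0 := fun r hr =>
    (h.S_deriv v hr).unique ((hasDerivAt_const r (0:X)).congr_of_eventuallyEq
      ((eventually_gt_nhds hr).mono fun s hs => hS s hs))
  refine tendsto_nhds_unique hlim (tendsto_const_nhds.congr' ?_)
  filter_upwards [self_mem_nhdsWithin] with r hr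
  rw [hTz r hr, smul_zero]

/-! ### Fubini on a triangle and the resolvent equation for `J_2` -/

/-- Interchange of the order of integration on the triangle `0 < σ < r ≤ t`. -/
lemma tri_swap {Φ : ℝ → ℝ → X} {t : ℝ} (ht : 0 ≤ t)
    (hi : Integrable ({p : ℝ × ℝ | p.2 < p.1}.indicator fun p => Φ p.1 p.2)
      ((volume.restrict (Ioc 0 t)).prod (volume.restrict (Ioc 0 t)))) :
    (∫ r in (0:ℝ)..t, ∫ σ in (0:ℝ)..r, Φ r σ = ∫ σ in (0:ℝ)..t, ∫ r in σ..t, Φ r σ) ∧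
    IntervalIntegrable (fun r => ∫ σ in (0:ℝ)..r, Φ r σ) volume 0 t ∧
    IntervalIntegrable (fun σ => ∫ r in σ..t, Φ r σ) volume 0 t := by
  have e1 : ∀ r ∈ Ioc 0 t, (∫ σ in Ioc 0 t, {p : ℝ × ℝ | p.2 < p.1}.indicator
      (fun p => Φ p.1 p.2) (r, σ)) = ∫ σ in (0:ℝ)..r, Φ r σ := by
    intro r hr
    rw [intervalIntegral.integral_of_le hr.1.le,
      integral_Ioc_eq_integral_Ioo (f := fun σ => Φ r σ)]
    have : (fun σ => {p : ℝ × ℝ | p.2 < p.1}.indicator (fun p => Φ p.1 p.2) (r, σ)) =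
        (Iio r).indicator (fun σ => Φ r σ) := by
      ext σ; simp [indicator]
    rw [this, setIntegral_indicator measurableSet_Iio]
    congr 2
    ext σ
    simp only [mem_inter_iff, mem_Ioc, mem_Iio, mem_Ioo]
    exact ⟨fun h => ⟨h.1.1, h.2⟩, fun h => ⟨⟨h.1, h.2.le.trans hr.2⟩, h.2⟩⟩
  have e2 : ∀ σ ∈ Ioc 0 t, (∫ r in Ioc 0 t, {p : ℝ × ℝ | p.2 < p.1}.indicator
      (fun p => Φ p.1 p.2) (r, σ)) = ∫ r in σ..t, Φ r σ := by
    intro σ hσ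
    rw [intervalIntegral.integral_of_le hσ.2]
    have : (fun r => {p : ℝ × ℝ | p.2 < p.1}.indicator (fun p => Φ p.1 p.2) (r, σ)) =
        (Ioi σ).indicator (fun r => Φ r σ) := by
      ext r; simp [indicator]
    rw [this, setIntegral_indicator measurableSet_Ioi]
    congr 2
    ext r
    simp only [mem_inter_iff, mem_Ioc, mem_Ioi]
    exact ⟨fun h => ⟨h.2, h.1.2⟩, fun h => ⟨⟨hσ.1.trans h.1, h.2⟩, h.1⟩⟩
  refine ⟨?_, ?_, ?_⟩
  · rw [intervalIntegral.integral_of_le ht, intervalIntegral.integral_of_le ht,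
      ← setIntegral_congr_fun measurableSet_Ioc e1, ← setIntegral_congr_fun measurableSet_Ioc e2]
    exact integral_integral_swap
      (f := fun r σ => {p : ℝ × ℝ | p.2 < p.1}.indicator (fun p => Φ p.1 p.2) (r, σ)) hi
  · rw [intervalIntegrable_iff_integrableOn_Ioc_of_le ht]
    exact IntegrableOn.congr_fun hi.integral_prod_left e1 measurableSet_Ioc
  · rw [intervalIntegrable_iff_integrableOn_Ioc_of_le ht]
    exact IntegrableOn.congr_fun hi.integral_prod_right e2 measurableSet_Ioc

lemma clm_intervalIntegrable (L : X →L[ℝ] X) {f : ℝ → X} {a b : ℝ}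
    (hf : IntervalIntegrable f volume a b) : IntervalIntegrable (fun r => L (f r)) volume a b :=
  ⟨L.integrable_comp hf.1, L.integrable_comp hf.2⟩

lemma kernel_integrable {a t : ℝ} (ha : 0 < a) (ht : 0 ≤ t) :
    IntervalIntegrable (fun r : ℝ => (t - r) ^ (a - 1)) volume 0 t := by
  simpa using beta_integrable (a := a) (b := 1) ha one_pos ht

lemma beta_shift {a b σ t : ℝ} (ha : 0 < a) (hb : 0 < b) (h : σ < t) :
    ∫ r in σ..t, (t - r) ^ (a - 1) * (r - σ) ^ (b - 1) =
      Real.Gamma a * Real.Gamma b / Real.Gamma (a + b) * (t - σ) ^ (a + b - 1) := by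
  rw [← beta_value ha hb (sub_pos.2 h)]
  have := intervalIntegral.integral_comp_sub_right (a := σ) (b := t)
    (fun u => (t - σ - u) ^ (a - 1) * u ^ (b - 1)) σ
  rw [sub_self] at this
  rw [← this]
  congr 1 with r
  ring_nf

/-- Composition rule for fractional integrals of orders `2 - α` and `α`. -/
lemma Adm.semigroup [CompleteSpace X] (h : Adm α T) {t : ℝ} (ht : 0 ≤ t) (x : X) :
    IntervalIntegrable (fun r => (t - r) ^ (2 - α - 1) • RLJ T α r x) volume 0 t ∧
    ∫ r in (0:ℝ)..t, (t - r) ^ (2 - α - 1) • RLJ T α r x =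
      (Real.Gamma (2 - α) * Real.Gamma α) • RLJ T 2 t x := by
  have h1 := h.one_lt
  have h2 := h.lt_two
  have hα0 : 0 < α := by linarith
  have hα2 : 0 < 2 - α := by linarith
  have hk := kernel_integrable hα2 ht
  have hTi := h.T_integrable ht x
  rw [intervalIntegrable_iff_integrableOn_Ioc_of_le ht] at hk hTi
  obtain ⟨hsw, hi1, -⟩ := tri_swap (X := X) (t := t)
    (Φ := fun r σ => (t - r) ^ (2 - α - 1) • (r - σ) ^ (α - 1) • T σ x) ht (by
      refine Integrable.mono' ((hk.norm.mul_prod hTi.norm).const_mul (t ^ (α - 1))) ?_ ?_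
      · refine AEStronglyMeasurable.indicator ?_ (measurableSet_lt measurable_snd measurable_fst)
        have m1 : Measurable fun p : ℝ × ℝ => (t - p.1) ^ (2 - α - 1) := by fun_prop
        have m2 : Measurable fun p : ℝ × ℝ => (p.1 - p.2) ^ (α - 1) := by fun_prop
        exact m1.aestronglyMeasurable.smul (m2.aestronglyMeasurable.smul
          hTi.aestronglyMeasurable.comp_snd)
      · rw [Measure.prod_restrict]
        refine (ae_restrict_iff' (measurableSet_Ioc.prod measurableSet_Ioc)).2
          (Eventually.of_forall ?_)
        rintro ⟨r, σ⟩ ⟨hr, hσ⟩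
        simp only at hr hσ
        rw [indicator]
        split_ifs with hlt
        · have hlt' : σ < r := hlt
          simp only [norm_smul]
          have hp : ‖(r - σ) ^ (α - 1)‖ ≤ t ^ (α - 1) := by
            rw [Real.norm_of_nonneg (Real.rpow_nonneg (by linarith) _)]
            exact Real.rpow_le_rpow (by linarith) (by linarith [hr.2, hσ.1]) (by linarith)
          calc _ ≤ ‖(t - r) ^ (2 - α - 1)‖ * (t ^ (α - 1) * ‖T σ x‖) := by gcongr
            _ = _ := by ring
        · simp only [norm_zero]; positivity)
  have e : ∀ r ∈ Ioc 0 t, ∫ σ in (0:ℝ)..r, (t - r) ^ (2 - α - 1) • (r - σ) ^ (α - 1) • T σ x =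
      (t - r) ^ (2 - α - 1) • RLJ T α r x := fun r hr => by
    rw [intervalIntegral.integral_smul, h.J_apply hα0 hr.1.le]
  constructor
  · rw [intervalIntegrable_iff_integrableOn_Ioc_of_le ht] at hi1 ⊢
    exact IntegrableOn.congr_fun hi1 e measurableSet_Ioc
  · rw [← integral_congr_Ioc ht e, hsw, h.J_apply two_pos ht, ← intervalIntegral.integral_smul,
      intervalIntegral.integral_of_le ht, intervalIntegral.integral_of_le ht,
      integral_Ioc_eq_integral_Ioo, integral_Ioc_eq_integral_Ioo]
    refine setIntegral_congr_fun measurableSet_Ioo (fun σ hσ => ?_)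
    simp only [smul_smul]
    rw [intervalIntegral.integral_smul_const, beta_shift hα2 hα0 hσ.2,
      show 2 - α + α = 2 by ring, Real.Gamma_two, div_one]

lemma resolvent_J [CompleteSpace X] (h : Adm α T) (hT : IsRLFracResolvent α T) (x : X)
    {t s : ℝ} (ht : 0 < t) (hs : 0 < s) :
    T s (RLJ T α t x) - RLJ T α s (T t x) =
      (s ^ (α - 2) / Real.Gamma (α - 1)) • RLJ T α t x -
      (t ^ (α - 2) / Real.Gamma (α - 1)) • RLJ T α s x := by
  have hα0 : 0 < α := by linarith [h.one_lt]
  have hG : Real.Gamma α ≠ 0 := (Real.Gamma_pos_of_pos hα0).ne'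
  have e : ∀ r > 0, ∀ y, RLint α r (fun σ => T σ y) = (Real.Gamma α)⁻¹ • RLJ T α r y :=
    fun r hr y => by rw [RLint, h.J_apply hα0 (le_of_lt hr)]
  have h1 := hT.2.2 x t ht s hs
  rw [e t ht, e s hs, e s hs, map_smul, smul_comm _ (Real.Gamma α)⁻¹, smul_comm _ (Real.Gamma α)⁻¹,
    ← smul_sub, ← smul_sub] at h1
  exact smul_right_injective X (inv_ne_zero hG) h1

/-- The fractional integral of the scalar coefficient `r^{α-2} / Γ(α-1)` is constant. -/
lemma Adm.weight [CompleteSpace X] (h : Adm α T) {t : ℝ} (ht : 0 < t) :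
    IntervalIntegrable (fun r : ℝ => (t - r) ^ (2 - α - 1) * (r ^ (α - 2) / Real.Gamma (α - 1)))
      volume 0 t ∧
    ∫ r in (0:ℝ)..t, (t - r) ^ (2 - α - 1) * (r ^ (α - 2) / Real.Gamma (α - 1)) =
      Real.Gamma (2 - α) := by
  have h1 : 0 < α - 1 := by linarith [h.one_lt]
  have h2 : 0 < 2 - α := by linarith [h.lt_two]
  have hG : Real.Gamma (α - 1) ≠ 0 := (Real.Gamma_pos_of_pos h1).ne'
  have e : (fun r : ℝ => (t - r) ^ (2 - α - 1) * (r ^ (α - 2) / Real.Gamma (α - 1))) =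
      fun r => (t - r) ^ (2 - α - 1) * r ^ (α - 1 - 1) * (Real.Gamma (α - 1))⁻¹ := by
    ext r
    rw [show α - 1 - 1 = α - 2 by ring]
    ring
  rw [e]
  refine ⟨(beta_integrable h2 h1 ht.le).mul_const _, ?_⟩
  rw [intervalIntegral.integral_mul_const, beta_value h2 h1 ht,
    show 2 - α + (α - 1) = 1 by ring, Real.Gamma_one, sub_self, Real.rpow_zero]
  field_simp

/-- Integrating the resolvent equation against `(t-r)^{1-α}` and `(s-r)^{1-α}` in its two
variables gives `K(s) J_2(t) - J_2(s) K(t) = Γ(2-α) (J_2(t) - J_2(s))`, where `K = J_{2-α}`. -/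
lemma resolvent_J2 [CompleteSpace X] (h : Adm α T) (hT : IsRLFracResolvent α T) (x : X)
    {t s : ℝ} (ht : 0 < t) (hs : 0 < s) :
    RLJ T (2 - α) s (RLJ T 2 t x) - RLJ T 2 s (RLJ T (2 - α) t x) =
      Real.Gamma (2 - α) • RLJ T 2 t x - Real.Gamma (2 - α) • RLJ T 2 s x := by
  have hα0 : 0 < α := by linarith [h.one_lt]
  have hα2 : 0 < 2 - α := by linarith [h.lt_two]
  set b := Real.Gamma (2 - α) * Real.Gamma α with hb
  set c := Real.Gamma (2 - α) with hc
  set γ := Real.Gamma (α - 1) with hγ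
  have hb0 : b ≠ 0 := (mul_pos (Real.Gamma_pos_of_pos hα2) (Real.Gamma_pos_of_pos hα0)).ne'
  have step1 : ∀ s > 0, T s (b • RLJ T 2 t x) - RLJ T α s (RLJ T (2 - α) t x) =
      (s ^ (α - 2) / γ) • b • RLJ T 2 t x - c • RLJ T α s x := by
    intro s hs
    obtain ⟨iA, vA⟩ := h.semigroup ht.le x
    obtain ⟨iG, vG⟩ := h.weight ht
    rw [← hc] at vG
    have iB := h.J_integrable hα2 ht.le x
    rw [← vA, h.J_apply hα2 ht.le, ← vG, ← intervalIntegral.integral_smul,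
      ← ContinuousLinearMap.intervalIntegral_comp_comm _ iA,
      ← ContinuousLinearMap.intervalIntegral_comp_comm _ iB,
      ← intervalIntegral.integral_smul_const,
      ← intervalIntegral.integral_sub (clm_intervalIntegrable (T s) iA)
        (clm_intervalIntegrable (RLJ T α s) iB),
      ← intervalIntegral.integral_sub (f := fun r => (s ^ (α - 2) / γ) •
        (t - r) ^ (2 - α - 1) • RLJ T α r x) (iA.smul _) ⟨iG.1.smul_const _, iG.2.smul_const _⟩]
    refine integral_congr_Ioc ht.le (fun r hr => ?_)
    simp only [map_smul]
    rw [← smul_sub, resolvent_J h hT x hr.1 hs, smul_sub, smul_smul, smul_smul, smul_smul,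
      mul_comm (s ^ (α - 2) / γ)]
  have step2 : RLJ T (2 - α) s (b • RLJ T 2 t x) - b • RLJ T 2 s (RLJ T (2 - α) t x) =
      c • b • RLJ T 2 t x - c • b • RLJ T 2 s x := by
    obtain ⟨iA, vA⟩ := h.semigroup hs.le x
    obtain ⟨iA', vA'⟩ := h.semigroup hs.le (RLJ T (2 - α) t x)
    obtain ⟨iG, vG⟩ := h.weight hs
    have iB := h.J_integrable hα2 hs.le (b • RLJ T 2 t x)
    rw [← vA', ← vA, h.J_apply hα2 hs.le, ← intervalIntegral.integral_smul,
      ← intervalIntegral.integral_sub iB iA']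
    have : c • b • RLJ T 2 t x = ∫ r in (0:ℝ)..s,
        ((s - r) ^ (2 - α - 1) * (r ^ (α - 2) / γ)) • b • RLJ T 2 t x := by
      rw [intervalIntegral.integral_smul_const, vG]
    rw [this, ← intervalIntegral.integral_sub (g := fun r => c •
        (s - r) ^ (2 - α - 1) • RLJ T α r x) ⟨iG.1.smul_const _, iG.2.smul_const _⟩ (iA.smul _)]
    refine integral_congr_Ioc hs.le (fun r hr => ?_)
    rw [← smul_sub, step1 r hr.1, smul_sub, smul_smul, smul_comm c]
  rw [map_smul, smul_comm c b, smul_comm c b, ← smul_sub, ← smul_sub] at step2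
  exact smul_right_injective X hb0 step2

/-! ### The kernel `(t+s-σ-τ)^{1-α}` -/

lemma Adm.TT_cont [CompleteSpace X] (h : Adm α T) (x : X) :
    ContinuousOn (fun p : ℝ × ℝ => T p.1 (T p.2 x)) (Ioi 0 ×ˢ Ioi 0) :=
  h.joint.comp (continuousOn_fst.prodMk ((h.cont x).comp continuousOn_snd fun _ hp => hp.2))
    (fun _ hp => ⟨hp.1, mem_univ _⟩)

lemma Adm.M_integrable [CompleteSpace X] (h : Adm α T) (x : X) {t s : ℝ} (ht : 0 < t)
    (hs : 0 < s) :
    Integrable (fun p : ℝ × ℝ => (t + s - p.1 - p.2) ^ (2 - α - 1) • T p.1 (T p.2 x))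
      ((volume.restrict (Ioc 0 t)).prod (volume.restrict (Ioc 0 s))) := by
  have h1 := h.one_lt
  have h2 := h.lt_two
  obtain ⟨C, hC0, hC⟩ := h.bound t ht
  have hk := beta_integrable (a := 2 - α) (b := α - 1) (t := t) (by linarith) (by linarith) ht.le
  have hTi := h.T_integrable hs.le x
  rw [intervalIntegrable_iff_integrableOn_Ioo_of_le ht.le] at hk
  rw [intervalIntegrable_iff_integrableOn_Ioc_of_le hs.le] at hTi
  -- The endpoint `σ = t` is dropped: there the dominating kernel takes the junk value `0 ^ (1-α)`.
  rw [← restrict_Ioo_eq_restrict_Ioc (a := (0:ℝ)) (b := t)]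
  refine Integrable.mono' ((hk.mul_prod hTi.norm).const_mul C) ?_ ?_
  · have m1 : Measurable fun p : ℝ × ℝ => (t + s - p.1 - p.2) ^ (2 - α - 1) := by fun_prop
    rw [Measure.prod_restrict]
    exact m1.aestronglyMeasurable.smul (((h.TT_cont x).mono (prod_mono
      (fun r hr => hr.1) (fun r hr => hr.1))).aestronglyMeasurable
        (measurableSet_Ioo.prod measurableSet_Ioc))
  · rw [Measure.prod_restrict]
    refine (ae_restrict_iff' (measurableSet_Ioo.prod measurableSet_Ioc)).2
      (Eventually.of_forall ?_)
    rintro ⟨σ, τ⟩ ⟨hσ, hτ⟩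
    simp only at hσ hτ
    simp only [norm_smul]
    have hp : ‖(t + s - σ - τ) ^ (2 - α - 1)‖ ≤ (t - σ) ^ (2 - α - 1) := by
      rw [Real.norm_of_nonneg (Real.rpow_nonneg (by linarith [hσ.2, hτ.2]) _)]
      exact Real.rpow_le_rpow_of_nonpos (by linarith [hσ.2]) (by linarith [hτ.2]) (by linarith)
    have hq := (T σ).le_of_opNorm_le (hC σ ⟨hσ.1, hσ.2.le⟩) (T τ x)
    have h0 : 0 ≤ (t - σ) ^ (2 - α - 1) := (norm_nonneg _).trans hp
    rw [show α - 1 - 1 = α - 2 by ring]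
    calc _ ≤ (t - σ) ^ (2 - α - 1) * (C * σ ^ (α - 2) * ‖T τ x‖) := by gcongr
      _ = _ := by ring

/-- The double integral `∫_0^t ∫_0^s (t+s-σ-τ)^{1-α} T(σ) T(τ) x dτ dσ`. -/
noncomputable def RLM (α : ℝ) (T : ℝ → X →L[ℝ] X) (t s : ℝ) (x : X) : X :=
  ∫ σ in (0:ℝ)..t, ∫ τ in (0:ℝ)..s, (t + s - σ - τ) ^ (2 - α - 1) • T σ (T τ x)

lemma Adm.M_eq_prod [CompleteSpace X] (h : Adm α T) (x : X) {t s : ℝ} (ht : 0 < t) (hs : 0 < s) :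
    RLM α T t s x = ∫ p : ℝ × ℝ, (t + s - p.1 - p.2) ^ (2 - α - 1) • T p.1 (T p.2 x)
      ∂((volume.restrict (Ioc 0 t)).prod (volume.restrict (Ioc 0 s))) := by
  rw [integral_prod _ (h.M_integrable x ht hs), RLM, intervalIntegral.integral_of_le ht.le]
  simp only [intervalIntegral.integral_of_le hs.le]

lemma Adm.M_J2 [CompleteSpace X] (h : Adm α T) (x : X) {t s ε : ℝ} (ht : 0 < t) (hs : 0 < s)
    (hε : 0 < ε) : RLM α T t s (RLJ T 2 ε x) = RLJ T 2 ε (RLM α T t s x) := by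
  rw [h.M_eq_prod _ ht hs, h.M_eq_prod _ ht hs,
    ← ContinuousLinearMap.integral_comp_comm _ (h.M_integrable x ht hs), Measure.prod_restrict]
  refine setIntegral_congr_fun (measurableSet_Ioc.prod measurableSet_Ioc) ?_
  rintro ⟨σ, τ⟩ ⟨hσ, hτ⟩
  simp only [map_smul]
  rw [h.T_J_comm two_pos hε.le hτ.1, h.T_J_comm two_pos hε.le hσ.1]

/-- Integrability on the triangle `s < τ, σ + τ < t + s`, in the variables `(r, σ)` with
`τ = t + s - r`; it comes from a convolution bound, since `(r-σ)^{1-α} σ^{α-2}` is a convolution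
kernel with integrable factors. -/
lemma Adm.N_integrable [CompleteSpace X] (h : Adm α T) (x : X) {t s : ℝ} (ht : 0 < t)
    (hs : 0 < s) :
    Integrable ({p : ℝ × ℝ | p.2 < p.1}.indicator fun p =>
      (p.1 - p.2) ^ (2 - α - 1) • T p.2 (T (t + s - p.1) x))
      ((volume.restrict (Ioc 0 t)).prod (volume.restrict (Ioc 0 t))) := by
  have h1 := h.one_lt
  have h2 := h.lt_two
  obtain ⟨C, hC0, hC⟩ := h.bound t ht
  obtain ⟨D, hD⟩ := isCompact_Icc.bddAbove_image
    ((h.cont x).mono (fun r (hr : r ∈ Icc s (t + s)) => lt_of_lt_of_le hs hr.1)).norm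
  have hf : Integrable ((Ioc 0 t).indicator fun σ : ℝ => σ ^ (α - 2)) volume := by
    rw [integrable_indicator_iff measurableSet_Ioc,
      ← intervalIntegrable_iff_integrableOn_Ioc_of_le ht.le]
    exact intervalIntegral.intervalIntegrable_rpow' (by linarith)
  have hg : Integrable ((Ioc 0 t).indicator fun u : ℝ => u ^ (2 - α - 1)) volume := by
    rw [integrable_indicator_iff measurableSet_Ioc,
      ← intervalIntegrable_iff_integrableOn_Ioc_of_le ht.le]
    exact intervalIntegral.intervalIntegrable_rpow' (by linarith)
  have hfg := (hf.convolution_integrand (ContinuousLinearMap.mul ℝ ℝ) hg).integrableOn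
    (s := Ioc 0 t ×ˢ Ioc 0 t)
  rw [IntegrableOn, ← Measure.prod_restrict] at hfg
  refine Integrable.mono' (hfg.const_mul (C * D)) ?_ ?_
  · refine AEStronglyMeasurable.indicator ?_ (measurableSet_lt measurable_snd measurable_fst)
    have m1 : Measurable fun p : ℝ × ℝ => (p.1 - p.2) ^ (2 - α - 1) := by fun_prop
    rw [Measure.prod_restrict]
    have hc : ContinuousOn (fun p : ℝ × ℝ => T p.2 (T (t + s - p.1) x)) (Ioc 0 t ×ˢ Ioc 0 t) :=
      (h.TT_cont x).comp (f := fun p : ℝ × ℝ => (p.2, t + s - p.1)) (by fun_prop)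
        (fun p hp => ⟨hp.2.1, by simp only [mem_Ioi]; linarith [hp.1.2]⟩)
    exact m1.aestronglyMeasurable.smul
      (hc.aestronglyMeasurable (measurableSet_Ioc.prod measurableSet_Ioc))
  · rw [Measure.prod_restrict]
    refine (ae_restrict_iff' (measurableSet_Ioc.prod measurableSet_Ioc)).2
      (Eventually.of_forall ?_)
    rintro ⟨r, σ⟩ ⟨hr, hσ⟩
    simp only at hr hσ
    have hD' : ‖T (t + s - r) x‖ ≤ D := hD ⟨t + s - r, ⟨by linarith [hr.2], by linarith [hr.1]⟩, rfl⟩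
    have hD0 : 0 ≤ D := (norm_nonneg _).trans hD'
    simp only [ContinuousLinearMap.mul_apply']
    rw [indicator]
    split_ifs with hlt
    · have hlt' : σ < r := hlt
      have hm : r - σ ∈ Ioc 0 t := ⟨by linarith, by linarith [hr.2, hσ.1]⟩
      rw [indicator_of_mem hσ, indicator_of_mem hm, norm_smul,
        Real.norm_of_nonneg (Real.rpow_nonneg hm.1.le _)]
      have hq := (T σ).le_of_opNorm_le_of_le (hC σ hσ) hD'
      have h0 : 0 ≤ (r - σ) ^ (2 - α - 1) := Real.rpow_nonneg hm.1.le _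
      calc _ ≤ (r - σ) ^ (2 - α - 1) * (C * σ ^ (α - 2) * D) := by gcongr
        _ = _ := by ring
    · rw [norm_zero]
      refine mul_nonneg (mul_nonneg hC0 hD0) (mul_nonneg ?_ ?_) <;>
      · refine indicator_nonneg (fun u hu => Real.rpow_nonneg hu.1.le _) _

/-- The rectangle `(0,t) × (0,s)` is the region `σ < t, σ + τ < t + s` without the triangle
`s < τ, σ + τ < t + s`; on both regions one integration gives the operator `K = J_{2-α}`. -/
lemma Adm.M_eq [CompleteSpace X] (h : Adm α T) (x : X) {t s : ℝ} (ht : 0 < t) (hs : 0 < s) :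
    IntervalIntegrable (fun r => T r (RLJ T (2 - α) (t + s - r) x) -
      T (t + s - r) (RLJ T (2 - α) r x)) volume 0 t ∧
    RLM α T t s x = ∫ r in (0:ℝ)..t, (T r (RLJ T (2 - α) (t + s - r) x) -
      T (t + s - r) (RLJ T (2 - α) r x)) := by
  have hα2 : 0 < 2 - α := by linarith [h.lt_two]
  obtain ⟨hsw, i1, i2⟩ := tri_swap
    (Φ := fun r σ => (r - σ) ^ (2 - α - 1) • T σ (T (t + s - r) x))
    ht.le (h.N_integrable x ht hs)
  have e1 : ∀ r ∈ Ioc 0 t, ∫ σ in (0:ℝ)..r, (r - σ) ^ (2 - α - 1) • T σ (T (t + s - r) x) =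
      T (t + s - r) (RLJ T (2 - α) r x) := fun r hr => by
    rw [h.T_J_comm hα2 hr.1.le (by linarith [hr.2]), h.J_apply hα2 hr.1.le]
  have hM : IntervalIntegrable (fun σ => ∫ τ in (0:ℝ)..s,
      (t + s - σ - τ) ^ (2 - α - 1) • T σ (T τ x)) volume 0 t := by
    rw [intervalIntegrable_iff_integrableOn_Ioc_of_le ht.le]
    have := (h.M_integrable x ht hs).integral_prod_left
    simp only [intervalIntegral.integral_of_le hs.le]
    exact this
  have e2 : ∀ σ ∈ Ioc 0 t, (∫ τ in (0:ℝ)..s, (t + s - σ - τ) ^ (2 - α - 1) • T σ (T τ x)) +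
      (∫ r in σ..t, (r - σ) ^ (2 - α - 1) • T σ (T (t + s - r) x)) =
      T σ (RLJ T (2 - α) (t + s - σ) x) := fun σ hσ => by
    have hpos : 0 ≤ t + s - σ := by linarith [hσ.2]
    have hint := clm_intervalIntegrable (T σ) (h.J_integrable hα2 hpos x)
    have hch := intervalIntegral.integral_comp_sub_left (a := σ) (b := t)
      (fun τ => (t + s - σ - τ) ^ (2 - α - 1) • T σ (T τ x)) (t + s)
    rw [show t + s - t = s by ring] at hch
    have hch' : (∫ r in σ..t, (r - σ) ^ (2 - α - 1) • T σ (T (t + s - r) x)) =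
        ∫ τ in s..(t + s - σ), (t + s - σ - τ) ^ (2 - α - 1) • T σ (T τ x) := by
      rw [← hch]
      congr 1 with r
      rw [show t + s - σ - (t + s - r) = r - σ by ring]
    rw [hch', h.J_apply hα2 hpos,
      ← ContinuousLinearMap.intervalIntegral_comp_comm _ (h.J_integrable hα2 hpos x)]
    simp only [map_smul] at hint ⊢
    refine intervalIntegral.integral_add_adjacent_intervals (hint.mono_set ?_) (hint.mono_set ?_)
    · rw [uIcc_of_le hs.le, uIcc_of_le hpos]
      exact Icc_subset_Icc le_rfl (by linarith [hσ.2])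
    · rw [uIcc_of_le (by linarith [hσ.2]), uIcc_of_le hpos]
      exact Icc_subset_Icc hs.le le_rfl
  have i3 : IntervalIntegrable (fun r => T r (RLJ T (2 - α) (t + s - r) x)) volume 0 t := by
    have := hM.add i2
    rw [intervalIntegrable_iff_integrableOn_Ioc_of_le ht.le] at this ⊢
    exact IntegrableOn.congr_fun this e2 measurableSet_Ioc
  have i4 : IntervalIntegrable (fun r => T (t + s - r) (RLJ T (2 - α) r x)) volume 0 t := by
    rw [intervalIntegrable_iff_integrableOn_Ioc_of_le ht.le] at i1 ⊢
    exact IntegrableOn.congr_fun i1 e1 measurableSet_Ioc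
  refine ⟨i3.sub i4, ?_⟩
  rw [intervalIntegral.integral_sub i3 i4, ← integral_congr_Ioc ht.le e1,
    ← integral_congr_Ioc ht.le e2, intervalIntegral.integral_add hM i2, hsw, RLM]
  abel

/-! ### The functional equation -/

/-- The functional equation for vectors `x` on which `K(r) x = κ x + J_2(r) z` is differentiable
in `r`; it follows by integrating a derivative along the segment from `(0, t+s)` to `(t, s)`. -/
lemma Adm.special [CompleteSpace X] (h : Adm α T) {x z : X} {κ : ℝ}
    (hK : ∀ r > 0, RLJ T (2 - α) r x = κ • x + RLJ T 2 r z) {t s : ℝ} (ht : 0 < t) (hs : 0 < s) :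
    κ • RLJ T 1 (t + s) x = RLJ T (2 - α) t (RLJ T 1 s x) + RLJ T 1 t (RLJ T (2 - α) s x) -
      RLM α T t s x := by
  have hα2 : 0 < 2 - α := by linarith [h.lt_two]
  obtain ⟨hi, hM⟩ := h.M_eq x ht hs
  have hmaps : MapsTo (fun r => t + s - r) (Icc 0 t) (Ici 0) := fun r hr => by
    simp only [mem_Ici]; linarith [hr.2]
  have hsub : ContinuousOn (fun r : ℝ => t + s - r) (Icc 0 t) := by fun_prop
  have hid : MapsTo (fun r : ℝ => r) (Icc 0 t) (Ici 0) := fun r hr => hr.1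
  have hj := joint_cont (A := fun r => RLJ T 1 r) h.S_cont
  have hcont : ContinuousOn (fun r => κ • RLJ T 1 r x + κ • RLJ T 1 (t + s - r) x +
      RLJ T 1 r (RLJ T 2 (t + s - r) z) + RLJ T 1 (t + s - r) (RLJ T 2 r z)) (Icc 0 t) := by
    refine (((((h.S_cont x).mono hid).const_smul κ).add
      (((h.S_cont x).comp hsub hmaps).const_smul κ)).add ?_).add ?_
    · exact hj.comp (f := fun r => (r, RLJ T 2 (t + s - r) z))
        (continuousOn_id.prodMk ((h.J2_cont z).comp hsub hmaps))
        (fun r hr => ⟨hr.1, mem_univ _⟩)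
    · exact hj.comp (f := fun r => (t + s - r, RLJ T 2 r z))
        (hsub.prodMk ((h.J2_cont z).mono hid)) (fun r hr => ⟨hmaps hr, mem_univ _⟩)
  have hder : ∀ r ∈ Ioo 0 t, HasDerivAt (fun r => κ • RLJ T 1 r x + κ • RLJ T 1 (t + s - r) x +
      RLJ T 1 r (RLJ T 2 (t + s - r) z) + RLJ T 1 (t + s - r) (RLJ T 2 r z))
      (T r (RLJ T (2 - α) (t + s - r) x) - T (t + s - r) (RLJ T (2 - α) r x)) r := by
    intro r hr
    have hc : 0 < t + s - r := by linarith [hr.2]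
    have d1 := (h.S_deriv x hr.1).const_smul κ
    have d2 := ((h.S_deriv x hc).comp_const_sub (t + s) r).const_smul κ
    have d3 := prod_deriv (A := fun r => RLJ T 1 r) h.S_cont (Ici_mem_nhds hr.1)
      (h.S_deriv (RLJ T 2 (t + s - r) z) hr.1) ((h.J2_deriv z hc).comp_const_sub (t + s) r)
    have d4 := prod_deriv (A := fun r => RLJ T 1 (t + s - r)) (U := Iic (t + s))
      (fun y => (h.S_cont y).comp (by fun_prop) (fun u hu => by
        simp only [mem_Iic] at hu; simp only [mem_Ici]; linarith))
      (Iic_mem_nhds (by linarith))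
      ((h.S_deriv (RLJ T 2 r z) hc).comp_const_sub (t + s) r) (h.J2_deriv z hr.1)
    refine (((d1.add d2).add d3).add d4).congr_deriv ?_
    rw [hK r hr.1, hK _ hc, map_add, map_add, map_smul, map_smul, map_neg, smul_neg,
      h.J_comm one_pos hc.le one_pos hr.1.le z]
    abel
  have hval := intervalIntegral.integral_eq_sub_of_hasDerivAt_of_le ht.le hcont hder hi
  rw [← hM] at hval
  have z1 : ∀ y, RLJ T 1 0 y = 0 := fun y => by rw [h.J_one le_rfl]; simp
  have z2 : ∀ y, RLJ T 2 0 y = 0 := fun y => by rw [h.J_apply two_pos le_rfl]; simp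
  rw [show t + s - t = s by ring] at hval
  simp only [z1, z2, sub_zero, map_zero, smul_zero, zero_add, add_zero] at hval
  rw [hval, h.J_comm hα2 ht.le one_pos hs.le, hK t ht, hK s hs, map_add, map_add, map_smul,
    map_smul]
  abel

end Adm

/-- Every Riemann-Liouville `α`-order fractional resolvent is a Riemann-Liouville
`α`-order fractional cosine function. -/
theorem rl_frac_resolvent_is_cosine
    {X : Type*} [NormedAddCommGroup X] [NormedSpace ℝ X] [CompleteSpace X]
    (α : ℝ) (hα : α ∈ Set.Ioo (1:ℝ) 2) (T : ℝ → X →L[ℝ] X)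
    (hT : IsRLFracResolvent α T) :
    IsRLFracCosine α T := by
  have h := adm_of_resolvent hα hT
  have hα2 : 0 < 2 - α := by linarith [hα.2]
  have hG : Real.Gamma (α - 1) ≠ 0 := (Real.Gamma_pos_of_pos (by linarith [hα.1])).ne'
  refine ⟨h.cont, fun x => ?_, fun x t ht s hs => ?_⟩
  · have := ((hT.1 x).2).const_smul (Real.Gamma (α - 1))⁻¹
    refine this.congr (fun r => ?_)
    rw [smul_smul, inv_mul_cancel_left₀ hG]
  have hexp : 1 - α = 2 - α - 1 := by ring
  have t1 : (∫ σ in (0:ℝ)..t, ∫ τ in (0:ℝ)..s, (t - σ) ^ (1 - α) • T σ (T τ x)) =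
      RLJ T (2 - α) t (RLJ T 1 s x) := by
    rw [h.J_apply hα2 ht.le, h.J_one hs.le, hexp]
    congr 1 with σ
    rw [intervalIntegral.integral_smul,
      ContinuousLinearMap.intervalIntegral_comp_comm _ (h.T_integrable hs.le x)]
  have t2 : (∫ σ in (0:ℝ)..t, ∫ τ in (0:ℝ)..s, (s - τ) ^ (1 - α) • T σ (T τ x)) =
      RLJ T 1 t (RLJ T (2 - α) s x) := by
    rw [h.J_one ht.le, h.J_apply hα2 hs.le, hexp]
    congr 1 with σ
    rw [← ContinuousLinearMap.intervalIntegral_comp_comm _ (h.J_integrable hα2 hs.le x)]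
    simp only [map_smul]
  have t3 : (∫ σ in (0:ℝ)..t, ∫ τ in (0:ℝ)..s, (t + s - σ - τ) ^ (1 - α) • T σ (T τ x)) =
      RLM α T t s x := by
    rw [RLM, hexp]
  rw [t1, t2, t3, ← h.J_one (by positivity)]
  refine sub_eq_zero.1 (h.eq_zero_of_J2 (hT.1 _).2 (fun ε hε => ?_))
  -- `J_2(ε)` commutes with all terms, and `J_2(ε) x` is a vector to which `Adm.special` applies.
  have hsp := h.special (x := RLJ T 2 ε x)
    (z := RLJ T (2 - α) ε x - Real.Gamma (2 - α) • x) (κ := Real.Gamma (2 - α)) (fun r hr => by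
      have := resolvent_J2 h hT x hε hr
      rw [sub_eq_iff_eq_add] at this
      rw [this, map_sub, map_smul]
      abel) ht hs
  rw [h.M_J2 x ht hs hε, h.J_comm one_pos (by positivity) two_pos hε.le,
    h.J_comm one_pos hs.le two_pos hε.le, h.J_comm hα2 ht.le two_pos hε.le,
    h.J_comm hα2 hs.le two_pos hε.le, h.J_comm one_pos ht.le two_pos hε.le] at hsp
  rw [map_sub, map_smul, map_sub, map_add, hsp, sub_self]
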